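/- arXiv:2401.05640 — 2 statements merged into one kernel-verified Lean document; each statement's English description precedes it below -/
import Mathlib

section
/- Let G be a distance-regular graph of diameter 3 with intersection array {k, b₁, b₂; 1, c₂, c₃} and let q ≠ 0 be a real number. Then the matrix identity c₂c₃q²·𝔻_q = ((q²+q+1)a₂ − (q²+q)c₃)k·I + (q²c₂c₃ − (q²+q)a₁c₃ + (q²+q+1)(a₁a₂ − b₁c₂ − k))·A + ((q²+q)c₃ − (q²+q+1)(a₁+a₂))·A² + (q²+q+1)·A³ holds. -/
open Matrix

variable {V : Type*} [Fintype V] [DecidableEq V]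

/-- The distance-`i` matrix of a graph: the `(x,y)` entry is 1 if `dist x y = i`, else 0. -/
noncomputable def distM (G : SimpleGraph V) (i : ℕ) : Matrix V V ℝ :=
  Matrix.of fun x y => if G.dist x y = i then (1 : ℝ) else 0

/-- The `q`-distance matrix `𝔻_q = ∑_{i=1}^D (1 + 1/q + ⋯ + 1/q^{i-1}) • A_i`. -/
noncomputable def qDist (G : SimpleGraph V) (D : ℕ) (q : ℝ) : Matrix V V ℝ :=
  ∑ i ∈ Finset.Icc 1 D, (∑ j ∈ Finset.range i, (1 / q) ^ j) • distM G i

/-- `G` is distance-regular with diameter `D` and intersection numbers `b i`, `c i`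
(with `c 1 = 1`): for any vertices `x, y` at distance `i ≤ D`, the number of neighbors
of `y` at distance `i - 1` from `x` is `c i` and the number of neighbors of `y` at
distance `i + 1` from `x` is `b i`. -/
def IsDRG (G : SimpleGraph V) (D : ℕ) (b c : ℕ → ℕ) : Prop :=
  G.Connected ∧
  (∀ x y : V, G.dist x y ≤ D) ∧
  (∃ x y : V, G.dist x y = D) ∧
  c 1 = 1 ∧
  ∀ i ≤ D, ∀ x y : V, G.dist x y = i →
    ({z : V | G.Adj y z ∧ G.dist x z = i - 1} : Set V).ncard = c i ∧
    ({z : V | G.Adj y z ∧ G.dist x z = i + 1} : Set V).ncard = b i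

/-- `a i = k - b i - c i` as a real number, where `k = b 0`. -/
noncomputable def aInt (b c : ℕ → ℕ) (i : ℕ) : ℝ := (b 0 : ℝ) - (b i : ℝ) - (c i : ℝ)

/-!
Counting the neighbors of `y` by their distance from `x` turns distance-regularity into the
three-term recurrence `A_{i+1} A = b_i A_i + a_{i+1} A_{i+1} + c_{i+2} A_{i+2}`. Solving it for
`A₂` and `A₃` expresses `c₂ A₂` and `c₂c₃ A₃` as polynomials in `A`, and the identity is the
combination `c₂c₃q² 𝔻_q = q²c₂c₃ A + (q²+q)c₃ (c₂ A₂) + (q²+q+1) (c₂c₃ A₃)`.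
-/

/-- The set `Γ_j(x) ∩ Γ(y)` of neighbors of `y` at distance `j` from `x`, whose cardinality is an
entry of `A_j A` and, in a distance-regular graph, an intersection number. -/
def neighborsAtDist (G : SimpleGraph V) (x y : V) (j : ℕ) : Set V :=
  {z | G.Adj y z ∧ G.dist x z = j}

section NeighborsAtDist

omit [Fintype V] [DecidableEq V]

variable {G : SimpleGraph V} {x y : V}

lemma neighborsAtDist_eq_empty {j : ℕ} (hj : j + 1 < G.dist x y ∨ G.dist x y + 1 < j) :
    neighborsAtDist G x y j = ∅ := by
  refine Set.eq_empty_of_forall_notMem fun z ⟨hyz, hxz⟩ => ?_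
  have := hyz.diff_dist_adj (u := x)
  omega

lemma neighborsAtDist_self (G : SimpleGraph V) (y : V) :
    neighborsAtDist G y y 1 = G.neighborSet y := by
  ext z
  simp [neighborsAtDist]

lemma disjoint_neighborsAtDist {i j : ℕ} (hij : i ≠ j) :
    Disjoint (neighborsAtDist G x y i) (neighborsAtDist G x y j) :=
  Set.disjoint_left.2 fun _ hi hj => hij (hi.2.symm.trans hj.2)

lemma neighborSet_eq_union_neighborsAtDist {i : ℕ} (hxy : G.dist x y = i + 1) :
    G.neighborSet y = neighborsAtDist G x y i ∪ neighborsAtDist G x y (i + 1) ∪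
      neighborsAtDist G x y (i + 2) := by
  ext z
  have hdist (hyz : G.Adj y z) :
      G.dist x z = i ∨ G.dist x z = i + 1 ∨ G.dist x z = i + 2 := by
    have := hyz.diff_dist_adj (u := x)
    omega
  simp only [neighborsAtDist, SimpleGraph.mem_neighborSet, Set.mem_union, Set.mem_ofPred_eq]
  tauto

lemma ncard_neighborSet_eq_add [Finite V] {i : ℕ} (hxy : G.dist x y = i + 1) :
    (G.neighborSet y).ncard = (neighborsAtDist G x y i).ncard +
      (neighborsAtDist G x y (i + 1)).ncard + (neighborsAtDist G x y (i + 2)).ncard := by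
  rw [neighborSet_eq_union_neighborsAtDist hxy, Set.ncard_union_eq, Set.ncard_union_eq]
  · exact disjoint_neighborsAtDist (by omega)
  · exact Set.disjoint_union_left.2
      ⟨disjoint_neighborsAtDist (by omega), disjoint_neighborsAtDist (by omega)⟩

end NeighborsAtDist

omit [Fintype V] in
lemma distM_zero {G : SimpleGraph V} (hG : G.Connected) : distM G 0 = 1 := by
  ext x y
  simp only [distM, of_apply, hG.dist_eq_zero_iff, one_apply]

omit [DecidableEq V] in
lemma distM_mul_distM_one_apply (G : SimpleGraph V) (i : ℕ) (x y : V) :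
    (distM G i * distM G 1) x y = (neighborsAtDist G x y i).ncard := by
  classical
  have hA : distM G 1 = G.adjMatrix ℝ := by
    ext u v
    simp only [distM, of_apply, SimpleGraph.dist_eq_one_iff_adj, SimpleGraph.adjMatrix_apply]
  have hset : neighborsAtDist G x y i = {z ∈ G.neighborFinset y | G.dist x z = i} := by
    ext z
    simp [neighborsAtDist]
  rw [hA, SimpleGraph.mul_adjMatrix_apply, hset, Set.ncard_coe_finset]
  simp only [distM, of_apply, Finset.sum_boole]

omit [Fintype V] [DecidableEq V] in
lemma qDist_three (G : SimpleGraph V) (q : ℝ) :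
    qDist G 3 q = distM G 1 + (1 + 1 / q) • distM G 2 +
      (1 + 1 / q + (1 / q) ^ 2) • distM G 3 := by
  simp [qDist, Finset.sum_Icc_succ_top, Finset.sum_range_succ]

namespace IsDRG

variable {G : SimpleGraph V} {D : ℕ} {b c : ℕ → ℕ} {x y : V} {i : ℕ}

section IntersectionNumbers

omit [Fintype V] [DecidableEq V]

lemma ncard_neighborsAtDist_eq_b (hG : IsDRG G D b c) (hxy : G.dist x y = i) :
    (neighborsAtDist G x y (i + 1)).ncard = b i :=
  (hG.2.2.2.2 i (hxy ▸ hG.2.1 x y) x y hxy).2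

lemma ncard_neighborsAtDist_eq_c (hG : IsDRG G D b c) (hxy : G.dist x y = i + 1) :
    (neighborsAtDist G x y i).ncard = c (i + 1) :=
  (hG.2.2.2.2 (i + 1) (hxy ▸ hG.2.1 x y) x y hxy).1

lemma ncard_neighborSet (hG : IsDRG G D b c) (y : V) : (G.neighborSet y).ncard = b 0 := by
  rw [← neighborsAtDist_self]
  exact hG.ncard_neighborsAtDist_eq_b SimpleGraph.dist_self

lemma ncard_neighborsAtDist_eq_aInt [Finite V] (hG : IsDRG G D b c) (hxy : G.dist x y = i + 1) :
    ((neighborsAtDist G x y (i + 1)).ncard : ℝ) = aInt b c (i + 1) := by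
  have hsum := ncard_neighborSet_eq_add hxy
  rw [hG.ncard_neighborSet, hG.ncard_neighborsAtDist_eq_c hxy,
    hG.ncard_neighborsAtDist_eq_b hxy] at hsum
  rw [aInt, hsum]
  push_cast
  ring

end IntersectionNumbers

omit [DecidableEq V] in
lemma distM_succ_mul_distM_one (hG : IsDRG G D b c) (i : ℕ) :
    distM G (i + 1) * distM G 1 =
      (b i : ℝ) • distM G i + aInt b c (i + 1) • distM G (i + 1) +
        (c (i + 2) : ℝ) • distM G (i + 2) := by
  ext x y
  rw [distM_mul_distM_one_apply]
  simp only [Matrix.add_apply, Matrix.smul_apply, distM, of_apply, smul_eq_mul]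
  obtain hxy | hxy | hxy | hfar : G.dist x y = i ∨ G.dist x y = i + 1 ∨ G.dist x y = i + 2 ∨
      (i + 1 + 1 < G.dist x y ∨ G.dist x y + 1 < i + 1) := by omega
  · simp [hxy, hG.ncard_neighborsAtDist_eq_b hxy]
  · simp [hxy, hG.ncard_neighborsAtDist_eq_aInt hxy]
  · simp [hxy, hG.ncard_neighborsAtDist_eq_c hxy]
  · have hne : G.dist x y ≠ i ∧ G.dist x y ≠ i + 1 ∧ G.dist x y ≠ i + 2 := by omega
    simp [hne, neighborsAtDist_eq_empty hfar]

lemma smul_distM_two (hG : IsDRG G D b c) :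
    (c 2 : ℝ) • distM G 2 =
      distM G 1 * distM G 1 - aInt b c 1 • distM G 1 - (b 0 : ℝ) • 1 := by
  have hrec := hG.distM_succ_mul_distM_one 0
  rw [distM_zero hG.1] at hrec
  rw [hrec]
  module

lemma smul_distM_three (hG : IsDRG G D b c) :
    ((c 2 : ℝ) * c 3) • distM G 3 =
      distM G 1 * distM G 1 * distM G 1 -
        (aInt b c 1 + aInt b c 2) • (distM G 1 * distM G 1) +
        (aInt b c 1 * aInt b c 2 - b 1 * c 2 - b 0) • distM G 1 + (aInt b c 2 * b 0) • 1 := by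
  have hrec : (c 3 : ℝ) • distM G 3 =
      distM G 2 * distM G 1 - aInt b c 2 • distM G 2 - (b 1 : ℝ) • distM G 1 := by
    rw [hG.distM_succ_mul_distM_one 1]
    module
  have hscaled : ((c 2 : ℝ) * c 3) • distM G 3 =
      ((c 2 : ℝ) • distM G 2) * distM G 1 - aInt b c 2 • ((c 2 : ℝ) • distM G 2) -
        ((b 1 : ℝ) * c 2) • distM G 1 := by
    rw [mul_smul, hrec, smul_mul_assoc]
    module
  rw [hscaled, hG.smul_distM_two]
  simp only [sub_mul, smul_mul_assoc, one_mul]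
  module

end IsDRG

/-- Proposition 3.1, matrix identity: for a distance-regular graph of
diameter 3 with intersection array `{k, b₁, b₂; 1, c₂, c₃}` and `q ≠ 0`,
`c₂c₃q² • 𝔻_q = ((q²+q+1)a₂ − (q²+q)c₃)k • I + (q²c₂c₃ − (q²+q)a₁c₃ +
(q²+q+1)(a₁a₂ − b₁c₂ − k)) • A + ((q²+q)c₃ − (q²+q+1)(a₁+a₂)) • A² + (q²+q+1) • A³`. -/
theorem stmt0 (G : SimpleGraph V) (b c : ℕ → ℕ) (hG : IsDRG G 3 b c)
    (q : ℝ) (hq : q ≠ 0) :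
    ((c 2 : ℝ) * (c 3 : ℝ) * q ^ 2) • qDist G 3 q =
      ((((q ^ 2 + q + 1) * aInt b c 2 - (q ^ 2 + q) * (c 3 : ℝ)) * (b 0 : ℝ)) •
          (1 : Matrix V V ℝ))
      + ((q ^ 2 * (c 2 : ℝ) * (c 3 : ℝ) - (q ^ 2 + q) * aInt b c 1 * (c 3 : ℝ)
          + (q ^ 2 + q + 1) * (aInt b c 1 * aInt b c 2 - (b 1 : ℝ) * (c 2 : ℝ) - (b 0 : ℝ))) •
          distM G 1)
      + (((q ^ 2 + q) * (c 3 : ℝ) - (q ^ 2 + q + 1) * (aInt b c 1 + aInt b c 2)) •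
          (distM G 1 * distM G 1))
      + ((q ^ 2 + q + 1) • (distM G 1 * distM G 1 * distM G 1)) := by
  have hcombination : ((c 2 : ℝ) * c 3 * q ^ 2) • qDist G 3 q =
      (q ^ 2 * c 2 * c 3) • distM G 1 + ((q ^ 2 + q) * c 3) • ((c 2 : ℝ) • distM G 2) +
        (q ^ 2 + q + 1) • (((c 2 : ℝ) * c 3) • distM G 3) := by
    rw [qDist_three]
    match_scalars <;> field_simp
  rw [hcombination, hG.smul_distM_two, hG.smul_distM_three]
  module
end

section
/- There exists no bipartite distance-regular graph G of diameter 3 whose q-distance matrix 𝔻_q has exactly 2 distinct eigenvalues, for any real number q ≠ 0. Equivalently: if G is a bipartite distance-regular graph of diameter 3 and q ≠ 0, then 𝔻_q has at least 3 distinct eigenvalues. -/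
open Matrix

variable {V : Type*} [Fintype V] [DecidableEq V]

/-- `G` is bipartite: the vertex set can be split into two parts such that every edge has
one endpoint in each part. -/
def IsBipartiteGraph (G : SimpleGraph V) : Prop :=
  ∃ S : Set V, ∀ x y : V, G.Adj x y → (x ∈ S ↔ y ∉ S)

/-!
If the real symmetric matrix `M = 𝔻_q` had at most two eigenvalues, then `M² = s M + p I` for some
`s`, `p`. Distinct vertices on the same side of the bipartition are at distance 2, so `M` takes the
constant value `b = 1 + 1/q` there, while its entries across the bipartition are geometric sums of
odd length, hence positive. Write `C x` for the sum of row `x` across the bipartition.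

* For `x ≠ y` on the same side, `b = 0` would make the `(x, y)` entry of `M²` both zero and
  positive, so `b ≠ 0`.
* For `x`, `y` on opposite sides, comparing entries of `M²` gives
  `b (C x + C y) = (s + 2b) M x y`, and `s + 2b ≠ 0` because the left side is nonzero. Hence
  `M x₀ x₁ + M x₂ x₃ = M x₁ x₂ + M x₀ x₃` whenever the sides of `x₀, x₁, x₂, x₃` alternate.

Along a geodesic of length 3 this reads `1 + 1 = 1 + (1 + 1/q + 1/q²)`, that is `b / q = 0`.
-/

section Spectrum

variable {R A : Type*} {P : A → Prop} [CommRing R] [StarRing R] [MetricSpace R]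
  [IsTopologicalRing R] [ContinuousStar R] [TopologicalSpace A] [Ring A] [StarRing A]
  [Algebra R A] [ContinuousFunctionalCalculus R A P]

lemma aeval_eq_zero_of_forall_mem_spectrum {a : A} (ha : P a) {f : Polynomial R}
    (hf : ∀ x ∈ spectrum R a, f.eval x = 0) : Polynomial.aeval a f = 0 :=
  calc Polynomial.aeval a f
    _ = cfc f.eval a := (cfc_polynomial f a ha).symm
    _ = cfc (fun _ => 0) a := cfc_congr hf
    _ = 0 := cfc_const_zero R a

lemma mul_self_eq_of_spectrum_subset_pair {a : A} (ha : P a) {α β : R}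
    (h : spectrum R a ⊆ {α, β}) : a * a = (α + β) • a + (-(α * β)) • (1 : A) := by
  have hroots : Polynomial.aeval a (Polynomial.X * Polynomial.X - (α + β) • Polynomial.X +
      (α * β) • (1 : Polynomial R)) = 0 := by
    refine aeval_eq_zero_of_forall_mem_spectrum ha fun x hx => ?_
    simp only [Polynomial.eval_add, Polynomial.eval_sub, Polynomial.eval_smul,
      Polynomial.eval_mul, Polynomial.eval_X, Polynomial.eval_one, smul_eq_mul]
    rcases h hx with rfl | rfl <;> ring
  simp only [map_add, map_sub, map_smul, map_mul, map_one, Polynomial.aeval_X] at hroots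
  rw [← sub_eq_zero, ← hroots]
  module

end Spectrum

lemma exists_subset_pair_of_ncard_le_two {α : Type*} [Infinite α] {s : Set α} (hs : s.Finite)
    (h : s.ncard ≤ 2) : ∃ a b, s ⊆ {a, b} := by
  classical
  rw [Set.ncard_eq_toFinset_card s hs] at h
  obtain ⟨t, hst, ht⟩ := Infinite.exists_superset_card_eq hs.toFinset 2 h
  obtain ⟨a, b, -, rfl⟩ := Finset.card_eq_two.mp ht
  exact ⟨a, b, by simpa [← Finset.coe_subset] using hst⟩

lemma bool_eq_iff_ne_of_ne : ∀ {i j k : Bool}, i ≠ j → (k = j ↔ k ≠ i) := by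
  decide

section TwoColoredMatrix

variable {n R : Type*} {χ : n → Bool} {b : R} {M : Matrix n n R} {x y z : n}

/-- Symmetric matrices with zero diagonal whose entries between distinct indices of the same
colour all equal `b`. Weighted distance matrices of connected bipartite graphs of diameter at
most 3 have this shape, as distinct vertices of the same colour are at distance 2. -/
structure IsConstOnColors [Zero R] (χ : n → Bool) (b : R) (M : Matrix n n R) : Prop where
  isSymm : M.IsSymm
  apply_self (x : n) : M x x = 0
  apply_of_eq {x y : n} : χ x = χ y → x ≠ y → M x y = b

/-- The sum of the entries of row `x` over the columns whose colour differs from that of `x`;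
the analogue of the valency of `x` for the off-diagonal block of `M`. -/
def crossSum [Fintype n] [AddCommMonoid R] (χ : n → Bool) (M : Matrix n n R) (x : n) : R :=
  ∑ z with χ z ≠ χ x, M x z

lemma sum_filter_color_eq_crossSum [Fintype n] [AddCommMonoid R] (M : Matrix n n R)
    (h : χ x ≠ χ y) : ∑ z with χ z = χ y, M x z = crossSum χ M x :=
  Finset.sum_congr (Finset.filter_congr fun _ _ => bool_eq_iff_ne_of_ne h) fun _ _ => rfl

lemma crossSum_pos [Fintype n] [AddCommMonoid R] [PartialOrder R] [IsOrderedCancelAddMonoid R]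
    (hpos : ∀ z, χ x ≠ χ z → 0 < M x z) (h : χ x ≠ χ y) : 0 < crossSum χ M x :=
  Finset.sum_pos (fun z hz => hpos z (Finset.mem_filter.mp hz).2.symm) ⟨y, by simpa using h.symm⟩

namespace IsConstOnColors

section Ring

variable [Fintype n] [CommRing R]

lemma sum_filter_color_mul (hM : IsConstOnColors χ b M) (x : n) (f : n → R) :
    ∑ z with χ z = χ x, M x z * f z = b * (∑ z with χ z = χ x, f z - f x) := by
  classical
  have hentry : ∀ z ∈ Finset.univ.filter (χ · = χ x),
      M x z * f z = b * f z - if z = x then b * f x else 0 := by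
    intro z hz
    by_cases hzx : z = x
    · simp [hzx, hM.apply_self]
    · simp [hzx, hM.apply_of_eq (Finset.mem_filter.mp hz).2.symm (Ne.symm hzx)]
  rw [Finset.sum_congr rfl hentry, Finset.sum_sub_distrib, ← Finset.mul_sum, Finset.sum_ite_eq',
    if_pos (by simp), mul_sub]

lemma mul_self_apply_of_ne (hM : IsConstOnColors χ b M) (h : χ x ≠ χ y) :
    (M * M) x y = b * (crossSum χ M x + crossSum χ M y - 2 * M x y) := by
  have hx : ∑ z with χ z = χ x, M x z * M z y = b * (crossSum χ M y - M x y) := by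
    simp only [hM.isSymm.apply y]
    rw [hM.sum_filter_color_mul, sum_filter_color_eq_crossSum M h.symm, hM.isSymm.apply]
  have hy : ∑ z with ¬ χ z = χ x, M x z * M z y = b * (crossSum χ M x - M x y) := by
    have hcolor (z : n) : ¬ χ z = χ x ↔ χ z = χ y := (bool_eq_iff_ne_of_ne h).symm
    simp only [hcolor, hM.isSymm.apply y, mul_comm (M x _)]
    rw [hM.sum_filter_color_mul, sum_filter_color_eq_crossSum M h, hM.isSymm.apply x]
  rw [mul_apply, ← Finset.sum_filter_add_sum_filter_not _ (χ · = χ x), hx, hy]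
  ring

lemma mul_crossSum_add_crossSum [DecidableEq n] (hM : IsConstOnColors χ b M) {s p : R}
    (hquad : M * M = s • M + p • (1 : Matrix n n R)) (h : χ x ≠ χ y) :
    b * (crossSum χ M x + crossSum χ M y) = (s + 2 * b) * M x y := by
  have hxy : x ≠ y := ne_of_apply_ne χ h
  have hentry : (M * M) x y = s * M x y := by simp [hquad, hxy]
  linear_combination hentry - hM.mul_self_apply_of_ne h

end Ring

section Ordered

variable [Fintype n] [CommRing R] [LinearOrder R] [IsStrictOrderedRing R]
  [DecidableEq n] {s p : R}

lemma ne_zero_of_mul_self_eq (hM : IsConstOnColors χ b M)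
    (hpos : ∀ x y, χ x ≠ χ y → 0 < M x y)
    (hquad : M * M = s • M + p • (1 : Matrix n n R))
    (hxy : x ≠ y) (hcolor : χ x = χ y) (hxz : χ x ≠ χ z) : b ≠ 0 := by
  rintro rfl
  have hzero : (M * M) x y = 0 := by simp [hquad, hxy, hM.apply_of_eq hcolor hxy]
  have hnonneg : ∀ u v, 0 ≤ M u v := by
    intro u v
    by_cases huv : χ u = χ v
    · rcases eq_or_ne u v with rfl | hne
      · exact (hM.apply_self u).ge
      · exact (hM.apply_of_eq huv hne).ge
    · exact (hpos u v huv).le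
  have hsum : 0 < ∑ u, M x u * M u y :=
    Finset.sum_pos' (fun u _ => mul_nonneg (hnonneg x u) (hnonneg u y))
      ⟨z, Finset.mem_univ z, mul_pos (hpos x z hxz) (hpos z y (hcolor ▸ hxz.symm))⟩
  exact hsum.ne' hzero

-- The off-diagonal block is proportional to `crossSum x + crossSum y`, a sum of a function of the
-- row and a function of the column.
lemma apply_add_apply_eq_of_mul_self_eq (hM : IsConstOnColors χ b M)
    (hpos : ∀ x y, χ x ≠ χ y → 0 < M x y)
    (hquad : M * M = s • M + p • (1 : Matrix n n R)) (hb : b ≠ 0) {x₀ x₁ x₂ x₃ : n}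
    (h₀₁ : χ x₀ ≠ χ x₁) (h₁₂ : χ x₁ ≠ χ x₂) (h₂₃ : χ x₂ ≠ χ x₃) :
    M x₀ x₁ + M x₂ x₃ = M x₁ x₂ + M x₀ x₃ := by
  have h₀₃ : χ x₀ ≠ χ x₃ := (bool_eq_iff_ne_of_ne h₁₂).mpr h₀₁ ▸ h₂₃
  have hcross {x y : n} (h : χ x ≠ χ y) := hM.mul_crossSum_add_crossSum hquad h
  have hfactor : s + 2 * b ≠ 0 := by
    have hC := add_pos (crossSum_pos (hpos x₀) h₀₁) (crossSum_pos (hpos x₁) h₀₁.symm)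
    exact left_ne_zero_of_mul (hcross h₀₁ ▸ mul_ne_zero hb hC.ne')
  refine mul_left_cancel₀ hfactor ?_
  linear_combination hcross h₁₂ + hcross h₀₃ - hcross h₀₁ - hcross h₂₃

end Ordered

end IsConstOnColors

end TwoColoredMatrix

section Graph

variable {W : Type*} {G : SimpleGraph W} {D : ℕ} {q : ℝ} {x y : W}

lemma IsBipartiteGraph.nonempty_coloring (hG : IsBipartiteGraph G) :
    Nonempty (G.Coloring Bool) := by
  classical
  obtain ⟨S, hS⟩ := hG
  exact ⟨.mk (fun x => decide (x ∈ S)) fun {x y} hxy => by simp [hS x y hxy]⟩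

lemma exists_adj_adj_adj_of_dist_eq_three (h : G.dist x y = 3) :
    ∃ u v, G.Adj x u ∧ G.Adj u v ∧ G.Adj v y := by
  obtain ⟨w, hw⟩ := SimpleGraph.exists_walk_of_dist_ne_zero (G := G) (u := x) (v := y) (by lia)
  have hlen : w.length = 3 := hw.trans h
  have hfirst := w.adj_getVert_succ (i := 0) (by lia)
  have hlast := w.adj_getVert_succ (i := 2) (by lia)
  rw [w.getVert_zero] at hfirst
  rw [w.getVert_of_length_le (i := 2 + 1) hlen.le] at hlast
  exact ⟨w.getVert 1, w.getVert 2, hfirst, w.adj_getVert_succ (by lia), hlast⟩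

lemma even_dist_iff_color_eq (hconn : G.Connected) (χ : G.Coloring Bool) :
    Even (G.dist x y) ↔ χ x = χ y := by
  obtain ⟨w, hw⟩ := hconn.exists_walk_length_eq_dist x y
  rw [← hw, χ.even_length_iff_congr w]
  exact Bool.eq_iff_iff.symm

lemma qDist_apply_of_dist_le (q : ℝ) (h : G.dist x y ≤ D) :
    qDist G D q x y = ∑ j ∈ Finset.range (G.dist x y), (1 / q) ^ j := by
  simp only [qDist, distM, Matrix.sum_apply, Matrix.smul_apply, of_apply, smul_eq_mul, mul_ite,
    mul_one, mul_zero, Finset.sum_ite_eq, Finset.mem_Icc, h, and_true]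
  split_ifs with hpos
  · rfl
  · simp [Nat.lt_one_iff.mp (not_le.mp hpos)]

lemma isSymm_qDist (G : SimpleGraph W) (D : ℕ) (q : ℝ) : (qDist G D q).IsSymm := by
  ext x y
  simp only [qDist, distM, transpose_apply, Matrix.sum_apply, Matrix.smul_apply, of_apply,
    G.dist_comm (u := y)]

lemma qDist_apply_pos (hconn : G.Connected) (χ : G.Coloring Bool) (hdist : G.dist x y ≤ D)
    (h : χ x ≠ χ y) : 0 < qDist G D q x y := by
  rw [qDist_apply_of_dist_le q hdist]
  have hodd : Odd (G.dist x y) := by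
    rwa [← Nat.not_even_iff_odd, even_dist_iff_color_eq hconn χ]
  exact hodd.geom_sum_pos

lemma isConstOnColors_qDist (hconn : G.Connected) (hdiam : ∀ x y, G.dist x y ≤ 3)
    (χ : G.Coloring Bool) (q : ℝ) : IsConstOnColors χ (1 + 1 / q) (qDist G 3 q) where
  isSymm := isSymm_qDist G 3 q
  apply_self x := by simp [qDist_apply_of_dist_le q (hdiam x x)]
  apply_of_eq {x y} hcolor hne := by
    have hdist : G.dist x y = 2 := by
      have hpos := hconn.pos_dist_of_ne hne
      have hle := hdiam x y
      obtain ⟨m, hm⟩ := (even_dist_iff_color_eq hconn χ).mpr hcolor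
      lia
    rw [qDist_apply_of_dist_le q (hdiam x y), hdist, geom_sum_two, add_comm]

end Graph

theorem qDist_mul_self_ne (G : SimpleGraph V) (hconn : G.Connected)
    (hdiam : ∀ x y, G.dist x y ≤ 3) {x₀ x₃ : V} (hdist : G.dist x₀ x₃ = 3)
    (χ : G.Coloring Bool) {q : ℝ} (hq : q ≠ 0) (s p : ℝ) :
    qDist G 3 q * qDist G 3 q ≠ s • qDist G 3 q + p • (1 : Matrix V V ℝ) := by
  intro hquad
  obtain ⟨x₁, x₂, h₀₁, h₁₂, h₂₃⟩ := exists_adj_adj_adj_of_dist_eq_three hdist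
  have hM := isConstOnColors_qDist hconn hdiam χ q
  have hpos : ∀ x y, χ x ≠ χ y → 0 < qDist G 3 q x y := fun x y =>
    qDist_apply_pos hconn χ (hdiam x y)
  have hadj {x y : V} (h : G.Adj x y) : qDist G 3 q x y = 1 := by
    simp [qDist_apply_of_dist_le q (hdiam x y), SimpleGraph.dist_eq_one_iff_adj.mpr h]
  have hne : x₀ ≠ x₂ := by
    rintro rfl
    simp [SimpleGraph.dist_eq_one_iff_adj.mpr h₂₃] at hdist
  have hcolor : χ x₀ = χ x₂ :=
    (bool_eq_iff_ne_of_ne (χ.valid h₁₂)).mpr (χ.valid h₀₁)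
  have hb : 1 + 1 / q ≠ 0 := hM.ne_zero_of_mul_self_eq hpos hquad hne hcolor (χ.valid h₀₁)
  have hexchange := hM.apply_add_apply_eq_of_mul_self_eq hpos hquad hb
    (χ.valid h₀₁) (χ.valid h₁₂) (χ.valid h₂₃)
  rw [hadj h₀₁, hadj h₁₂, hadj h₂₃, qDist_apply_of_dist_le q (hdiam x₀ x₃), hdist,
    geom_sum_succ, geom_sum_two] at hexchange
  exact mul_ne_zero (one_div_ne_zero hq) hb (by linear_combination -hexchange)

theorem stmt11_general (G : SimpleGraph V) (hconn : G.Connected)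
    (hdiam : ∀ x y, G.dist x y ≤ 3) (hdist : ∃ x y, G.dist x y = 3)
    (hbip : IsBipartiteGraph G) (q : ℝ) (hq : q ≠ 0) :
    2 < (spectrum ℝ (qDist G 3 q)).ncard := by
  by_contra! hcard
  obtain ⟨x₀, x₃, h₀₃⟩ := hdist
  obtain ⟨χ⟩ := hbip.nonempty_coloring
  have hself : IsSelfAdjoint (qDist G 3 q) := by
    rw [isSelfAdjoint_iff, star_eq_conjTranspose, conjTranspose_eq_transpose_of_trivial]
    exact isSymm_qDist G 3 q
  obtain ⟨α, β, hspec⟩ :=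
    exists_subset_pair_of_ncard_le_two (qDist G 3 q).finite_real_spectrum hcard
  exact qDist_mul_self_ne G hconn hdiam h₀₃ χ hq _ _
    (mul_self_eq_of_spectrum_subset_pair hself hspec)

/-- Proposition 3.8: there is no bipartite distance-regular graph of
diameter 3 whose `q`-distance matrix has exactly 2 distinct eigenvalues (for any `q ≠ 0`). -/
theorem stmt11 (G : SimpleGraph V) (b c : ℕ → ℕ) (hG : IsDRG G 3 b c)
    (hbip : IsBipartiteGraph G) (q : ℝ) (hq : q ≠ 0) :
    (spectrum ℝ (qDist G 3 q)).ncard ≠ 2 :=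
  (stmt11_general G hG.1 hG.2.1 hG.2.2.1 hbip q hq).ne'
end
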